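/- arXiv:math/0703792 — 2 statements merged into one kernel-verified Lean document; each statement's English description precedes it below -/
import Mathlib

section
/- The monoid E(3,ℕ) is not finitely generated: there is no finite set S of 3×3 integer matrices contained in E(3,ℕ) such that every element of E(3,ℕ) is a product of finitely many elements of S (equivalently, such that the submonoid of the multiplicative monoid of 3×3 integer matrices generated by S equals E(3,ℕ)). -/
/-!
Every irreducible element of a monoid has the form `u * s * v` with `u`, `v` units and `s` in a
given generating set, so a finitely generated monoid with finitely many units has only finitely many
irreducibles. The units of `E(3,ℕ)` are finite in number because a nonnegative integer matrix with
nonnegative inverse has standard basis vectors as rows. It therefore suffices to find infinitely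
many irreducibles in `E(3,ℕ)`.

The vector `(1, -1, 1)` spans the kernel of `E`, hence `(1, -1, 1) M = ±(1, -1, 1)` for every
`M ∈ E(3,ℕ)`. If `X * Y` has first row `(0, 1, 0)`, then for some `i` the first row of `X` is the
`i`-th basis vector and the `i`-th row of `Y` is `(0, 1, 0)`, where `i` is `0`, `1` or `2`. For
`i = 1` the sign relation forces `Y` to be `1` or the coordinate reversal. For `i ≠ 1`, if moreover
the middle column of `X * Y` is `(1, 0, 0)`, then column `i` of `X` is `(1, 0, 0)` too, and now `X`
is forced to be one of these two units. So every nonunit `[[0, 1, 0], [*, 0, *], [*, 0, *]]` of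
`E(3,ℕ)` is irreducible, for instance `[[0, 1, 0], [n+1, 0, n+2], [n, 0, n+1]]` for each `n ∈ ℕ`.
-/

open Matrix

/-- The matrix E from the paper. -/
def Emat : Matrix (Fin 3) (Fin 3) ℤ := !![0, 1, 1; -1, 0, 1; -1, -1, 0]

/-- The monoid E(3,ℕ). -/
def E3N : Set (Matrix (Fin 3) (Fin 3) ℤ) :=
  {M | (∀ i j, 0 ≤ M i j) ∧
    (M * Emat * Mᵀ = Emat ∨ M * Emat * Mᵀ = -Emat) ∧
    (M.det = 1 ∨ M.det = -1)}

section Monoid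

variable {M : Type*} [Monoid M]

theorem exists_eq_units_mul_mul_units_of_irreducible {S : Set M} {p : M}
    (hp : p ∈ Submonoid.closure S) (hirr : Irreducible p) :
    ∃ s ∈ S, ∃ u v : Mˣ, p = u * s * v := by
  induction hp using Submonoid.closure_induction with
  | mem s hs => exact ⟨s, hs, 1, 1, by simp⟩
  | one => exact absurd hirr not_irreducible_one
  | mul x y _ _ ihx ihy =>
    rcases of_irreducible_mul hirr with ⟨w, rfl⟩ | ⟨w, rfl⟩
    · obtain ⟨s, hs, u, v, rfl⟩ := ihy ((irreducible_units_mul w).1 hirr)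
      exact ⟨s, hs, w * u, v, by simp only [Units.val_mul, mul_assoc]⟩
    · obtain ⟨s, hs, u, v, rfl⟩ := ihx ((irreducible_mul_units w).1 hirr)
      exact ⟨s, hs, u, v * w, by simp only [Units.val_mul, mul_assoc]⟩

theorem finite_setOf_irreducible_of_finite_units [Monoid.FG M] [Finite Mˣ] :
    {p : M | Irreducible p}.Finite := by
  obtain ⟨S, hS, hfin⟩ := Monoid.fg_iff.1 (inferInstance : Monoid.FG M)
  have hcover : {p : M | Irreducible p} ⊆
      (fun t : M × Mˣ × Mˣ ↦ (t.2.1 : M) * t.1 * t.2.2) '' (S ×ˢ Set.univ) := by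
    intro p hp
    obtain ⟨s, hs, u, v, rfl⟩ :=
      exists_eq_units_mul_mul_units_of_irreducible (hS ▸ Submonoid.mem_top p) hp
    exact ⟨(s, u, v), ⟨hs, trivial⟩, rfl⟩
  exact ((hfin.prod Set.finite_univ).image _).subset hcover

end Monoid

section NonnegativeMatrix

variable {m n : Type*} [Fintype m]

theorem exists_eq_single_of_sum_eq_one [DecidableEq m] {x : m → ℤ} (hx : ∀ i, 0 ≤ x i)
    (hsum : ∑ i, x i = 1) : ∃ i, x = Pi.single i 1 := by
  obtain ⟨i, -, hi⟩ := Finset.exists_ne_zero_of_sum_ne_zero (hsum.trans_ne one_ne_zero)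
  have hle : ∀ j ∈ Finset.univ, (Pi.single i 1 : m → ℤ) j ≤ x j := by
    intro j _
    obtain rfl | hji := eq_or_ne j i
    · simpa using Int.add_one_le_of_lt (lt_of_le_of_ne (hx j) hi.symm)
    · simpa [hji] using hx j
  have heq := (Finset.sum_eq_sum_iff_of_le hle).1 (by simp [hsum])
  exact ⟨i, funext fun j ↦ (heq j (Finset.mem_univ j)).symm⟩

theorem exists_eq_single_of_vecMul_eq_single [Finite n] [DecidableEq m] [DecidableEq n]
    {x : m → ℤ} {A : Matrix m n ℤ} (hx : ∀ i, 0 ≤ x i) (hA : ∀ i j, 0 ≤ A i j)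
    (hrow : ∀ i, A.row i ≠ 0) {j : n} (h : x ᵥ* A = Pi.single j 1) :
    ∃ i, x = Pi.single i 1 ∧ A.row i = Pi.single j 1 := by
  have := Fintype.ofFinite n
  have hrowSum (i : m) : 1 ≤ ∑ k, A i k := by
    obtain ⟨k, hk⟩ := Function.ne_iff.1 (hrow i)
    exact Finset.sum_pos' (fun k _ ↦ hA i k)
      ⟨k, Finset.mem_univ k, lt_of_le_of_ne (hA i k) (Ne.symm hk)⟩
  have htotal : ∑ i, x i * ∑ k, A i k = 1 := by
    simpa [h, dotProduct, mulVec] using dotProduct_mulVec x A 1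
  have hle : ∑ i, x i ≤ 1 := htotal ▸
    Finset.sum_le_sum fun i _ ↦ le_mul_of_one_le_right (hx i) (hrowSum i)
  have hne : ∑ i, x i ≠ 0 := by
    intro hzero
    have hx0 : ∀ i, x i = 0 := by simpa [Finset.sum_eq_zero_iff_of_nonneg, hx] using hzero
    simp [hx0] at htotal
  have hsum : ∑ i, x i = 1 := by
    have := Finset.sum_nonneg fun i (_ : i ∈ Finset.univ) ↦ hx i
    lia
  obtain ⟨i, rfl⟩ := exists_eq_single_of_sum_eq_one hx hsum
  exact ⟨i, rfl, by rwa [single_one_vecMul] at h⟩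

theorem apply_eq_zero_of_mul_apply_eq_zero {l R : Type*} [Semiring R] [PartialOrder R]
    [IsOrderedRing R] [NoZeroDivisors R] {A : Matrix l m R} {B : Matrix m n R}
    (hA : ∀ i j, 0 ≤ A i j) (hB : ∀ i j, 0 ≤ B i j) {i : l} {j : m} {k : n}
    (h : (A * B) i k = 0) (hjk : B j k ≠ 0) : A i j = 0 := by
  rw [mul_apply, Finset.sum_eq_zero_iff_of_nonneg fun j _ ↦ mul_nonneg (hA i j) (hB j k)] at h
  exact (mul_eq_zero.1 (h j (Finset.mem_univ j))).resolve_right hjk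

variable [DecidableEq m]

theorem row_ne_zero_of_det_ne_zero {R : Type*} [CommRing R] {A : Matrix m m R}
    (hA : A.det ≠ 0) (i : m) : A.row i ≠ 0 :=
  fun h ↦ hA (det_eq_zero_of_row_eq_zero i (congrFun h))

theorem exists_row_eq_single_of_mul_eq_one {A B : Matrix m m ℤ} (hA : ∀ i j, 0 ≤ A i j)
    (hB : ∀ i j, 0 ≤ B i j) (h : A * B = 1) (i : m) : ∃ j, A.row i = Pi.single j 1 := by
  have hdet : B.det ≠ 0 := (isUnit_det_of_left_inverse h).ne_zero
  have hrow : A.row i ᵥ* B = Pi.single i 1 := by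
    rw [← single_one_vecMul, vecMul_vecMul, h, vecMul_one]
  obtain ⟨j, hj, -⟩ :=
    exists_eq_single_of_vecMul_eq_single (hA i) hB (row_ne_zero_of_det_ne_zero hdet) hrow
  exact ⟨j, hj⟩

theorem exists_row_eq_single_of_isUnit {H : Submonoid (Matrix m m ℤ)}
    (hH : ∀ A ∈ H, ∀ i j, 0 ≤ A i j) {A : H} (hA : IsUnit A) (i : m) :
    ∃ j, (A : Matrix m m ℤ).row i = Pi.single j 1 := by
  obtain ⟨B, hAB⟩ := hA.exists_right_inv
  exact exists_row_eq_single_of_mul_eq_one (hH A A.2) (hH B B.2) (congrArg Subtype.val hAB) i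

theorem finite_units_of_nonneg {H : Submonoid (Matrix m m ℤ)}
    (hH : ∀ A ∈ H, ∀ i j, 0 ≤ A i j) : Finite Hˣ := by
  choose σ hσ using fun (u : Hˣ) ↦ exists_row_eq_single_of_isUnit hH u.isUnit
  refine Finite.of_injective σ fun u v huv ↦ Units.ext (Subtype.ext (ext_row fun i ↦ ?_))
  rw [hσ, hσ, huv]

end NonnegativeMatrix

namespace E3N

theorem one_mem : (1 : Matrix (Fin 3) (Fin 3) ℤ) ∈ E3N :=
  ⟨fun i j ↦ by rw [one_apply]; positivity, by simp, by simp⟩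

theorem mul_mem {X Y : Matrix (Fin 3) (Fin 3) ℤ} (hX : X ∈ E3N) (hY : Y ∈ E3N) :
    X * Y ∈ E3N := by
  obtain ⟨hX0, hXE, hXd⟩ := hX
  obtain ⟨hY0, hYE, hYd⟩ := hY
  refine ⟨fun i j ↦ ?_, ?_, ?_⟩
  · rw [mul_apply]
    exact Finset.sum_nonneg fun k _ ↦ mul_nonneg (hX0 i k) (hY0 k j)
  · have hcongr : X * Y * Emat * (X * Y)ᵀ = X * (Y * Emat * Yᵀ) * Xᵀ := by
      simp only [transpose_mul, Matrix.mul_assoc]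
    rw [hcongr]
    rcases hXE with hX | hX <;> rcases hYE with hY | hY <;> simp [hX, hY]
  · rcases hXd with hX | hX <;> rcases hYd with hY | hY <;> simp [hX, hY]

/-- `E(3,ℕ)` as a bundled submonoid of the integer matrices. -/
def submonoid : Submonoid (Matrix (Fin 3) (Fin 3) ℤ) where
  carrier := E3N
  one_mem' := one_mem
  mul_mem' := mul_mem

theorem isUnit_det {M : Matrix (Fin 3) (Fin 3) ℤ} (hM : M ∈ E3N) : IsUnit M.det :=
  Int.isUnit_iff.2 hM.2.2

theorem Emat_mulVec_eq_zero_iff {x : Fin 3 → ℤ} :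
    Emat *ᵥ x = 0 ↔ ∃ k : ℤ, x = k • ![1, -1, 1] := by
  constructor
  · intro h
    have h0 : x 1 + x 2 = 0 := by simpa [Emat, dotProduct, Fin.sum_univ_three] using congrFun h 0
    have h1 : -x 0 + x 2 = 0 := by simpa [Emat, dotProduct, Fin.sum_univ_three] using congrFun h 1
    refine ⟨x 0, funext fun i ↦ ?_⟩
    fin_cases i <;> simp <;> lia
  · rintro ⟨k, rfl⟩
    have hker : Emat *ᵥ ![1, -1, 1] = 0 := by decide
    rw [mulVec_smul, hker, smul_zero]

theorem vecMul_eq_or_eq_neg {M : Matrix (Fin 3) (Fin 3) ℤ} (hM : M ∈ E3N) :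
    ![1, -1, 1] ᵥ* M = ![1, -1, 1] ∨ ![1, -1, 1] ᵥ* M = -![1, -1, 1] := by
  have hker : Emat *ᵥ ![1, -1, 1] = 0 := Emat_mulVec_eq_zero_iff.2 ⟨1, by simp⟩
  have hM0 : M *ᵥ (Emat *ᵥ (![1, -1, 1] ᵥ* M)) = 0 := by
    rw [← mulVec_transpose, mulVec_mulVec, mulVec_mulVec]
    rcases hM.2.1 with h | h <;> simp only [h, neg_mulVec, hker, neg_zero]
  obtain ⟨k, hk⟩ := Emat_mulVec_eq_zero_iff.1
    (eq_zero_of_mulVec_eq_zero (isUnit_det hM).ne_zero hM0)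
  have hinv : ![1, -1, 1] = k • (![1, -1, 1] ᵥ* M⁻¹) := by
    rw [← smul_vecMul, ← hk, vecMul_vecMul, mul_nonsing_inv _ (isUnit_det hM), vecMul_one]
  have hunit : IsUnit k := IsUnit.of_mul_eq_one _ (congrFun hinv 0).symm
  rcases Int.isUnit_iff.1 hunit with rfl | rfl
  · exact Or.inl (by simpa using hk)
  · exact Or.inr (by simpa using hk)

theorem exists_alternating_col_sums {M : Matrix (Fin 3) (Fin 3) ℤ} (hM : M ∈ E3N) :
    ∃ ε : ℤ, (ε = 1 ∨ ε = -1) ∧ M 0 0 - M 1 0 + M 2 0 = ε ∧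
      M 0 1 - M 1 1 + M 2 1 = -ε ∧ M 0 2 - M 1 2 + M 2 2 = ε := by
  have hsum (j : Fin 3) : (![1, -1, 1] ᵥ* M) j = M 0 j - M 1 j + M 2 j := by
    simp [vecMul, dotProduct, Fin.sum_univ_three, sub_eq_add_neg]
  simp only [← hsum]
  rcases vecMul_eq_or_eq_neg hM with h | h
  · exact ⟨1, by simp [h]⟩
  · exact ⟨-1, by simp [h]⟩

/-- The permutation matrix reversing the three coordinates, the nontrivial unit of `E(3,ℕ)`. -/
def flipMat : Matrix (Fin 3) (Fin 3) ℤ := !![0, 0, 1; 0, 1, 0; 1, 0, 0]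

theorem flipMat_mem : flipMat ∈ E3N :=
  ⟨by simp [flipMat, Fin.forall_fin_succ], .inr (by decide), .inr (by decide)⟩

theorem flipMat_mul_self : flipMat * flipMat = 1 := by
  decide

theorem isUnit_of_eq_one_or_eq_flipMat {U : submonoid}
    (hU : (U : Matrix (Fin 3) (Fin 3) ℤ) = 1 ∨ (U : Matrix (Fin 3) (Fin 3) ℤ) = flipMat) :
    IsUnit U := by
  have hsq : U * U = 1 := by
    ext1
    rcases hU with h | h <;> simp [h, flipMat_mul_self]
  exact ⟨⟨U, U, hsq, hsq⟩, rfl⟩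

theorem eq_one_or_eq_flipMat_of_row_one {M : Matrix (Fin 3) (Fin 3) ℤ} (hM : M ∈ E3N)
    (hrow : M.row 1 = Pi.single 1 1) : M = 1 ∨ M = flipMat := by
  have h10 : M 1 0 = 0 := congrFun hrow 0
  have h11 : M 1 1 = 1 := congrFun hrow 1
  have h12 : M 1 2 = 0 := congrFun hrow 2
  obtain ⟨ε, hε, hcol0, hcol1, hcol2⟩ := exists_alternating_col_sums hM
  have nonneg00 := hM.1 0 0
  have nonneg02 := hM.1 0 2
  have nonneg20 := hM.1 2 0
  have nonneg22 := hM.1 2 2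
  obtain rfl : ε = 1 := by lia
  have hmid : M 0 1 = 0 ∧ M 2 1 = 0 := by
    have nonneg01 := hM.1 0 1
    have nonneg21 := hM.1 2 1
    lia
  obtain ⟨h01, h21⟩ := hmid
  have h20 : M 2 0 = 1 - M 0 0 := by lia
  have h22 : M 2 2 = 1 - M 0 2 := by lia
  have hdet : M.det = M 0 0 - M 0 2 := by
    rw [det_fin_three, h01, h10, h11, h12, h20, h21, h22]
    ring
  refine hM.2.2.imp (fun h ↦ ?_) (fun h ↦ ?_) <;>
  · ext i j
    fin_cases i <;> fin_cases j <;> simp [flipMat] <;> lia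

theorem eq_one_of_row_zero_of_col_zero {M : Matrix (Fin 3) (Fin 3) ℤ} (hM : M ∈ E3N)
    (hrow : M.row 0 = Pi.single 0 1) (hcol : M.col 0 = Pi.single 0 1) : M = 1 := by
  have h00 : M 0 0 = 1 := congrFun hrow 0
  have h01 : M 0 1 = 0 := congrFun hrow 1
  have h02 : M 0 2 = 0 := congrFun hrow 2
  have h10 : M 1 0 = 0 := congrFun hcol 1
  have h20 : M 2 0 = 0 := congrFun hcol 2
  obtain ⟨ε, -, hcol0, hcol1, hcol2⟩ := exists_alternating_col_sums hM
  have h11 : M 1 1 = M 2 1 + 1 := by lia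
  have h12 : M 1 2 = M 2 2 - 1 := by lia
  have hdet : M.det = M 2 1 + M 2 2 := by
    rw [det_fin_three, h00, h01, h02, h10, h11, h12, h20]
    ring
  have hlast : M 2 1 = 0 ∧ M 2 2 = 1 := by
    have nonneg12 := hM.1 1 2
    have nonneg21 := hM.1 2 1
    have hdet_unit := hM.2.2
    lia
  ext i j
  fin_cases i <;> fin_cases j <;> simp <;> lia

theorem eq_flipMat_of_row_zero_of_col_two {M : Matrix (Fin 3) (Fin 3) ℤ} (hM : M ∈ E3N)
    (hrow : M.row 0 = Pi.single 2 1) (hcol : M.col 2 = Pi.single 0 1) : M = flipMat := by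
  have hflip : M * flipMat = 1 := by
    refine eq_one_of_row_zero_of_col_zero (mul_mem hM flipMat_mem) ?_ ?_
    · rw [← single_one_vecMul, ← vecMul_vecMul, single_one_vecMul, hrow, single_one_vecMul]
      decide
    · have hbasis : flipMat *ᵥ Pi.single 0 1 = Pi.single 2 1 := by decide
      rw [← mulVec_single_one, ← mulVec_mulVec, hbasis, mulVec_single_one, hcol]
  rw [← M.mul_one, ← flipMat_mul_self, ← Matrix.mul_assoc, hflip, Matrix.one_mul]

theorem isUnit_or_isUnit_of_mul_row_zero_of_mul_col_one {X Y : submonoid}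
    (hrow : (X * Y : Matrix (Fin 3) (Fin 3) ℤ).row 0 = Pi.single 1 1)
    (hcol : (X * Y : Matrix (Fin 3) (Fin 3) ℤ).col 1 = Pi.single 0 1) :
    IsUnit X ∨ IsUnit Y := by
  obtain ⟨X, hX⟩ := X
  obtain ⟨Y, hY⟩ := Y
  obtain ⟨i, hXi, hYi⟩ := exists_eq_single_of_vecMul_eq_single (hX.1 0) hY.1
    (row_ne_zero_of_det_ne_zero (isUnit_det hY).ne_zero) hrow
  have hXcol : X.col i = Pi.single 0 1 := by
    ext k
    obtain rfl | hk := eq_or_ne k 0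
    · exact (congrFun hXi i).trans (by simp)
    · rw [Pi.single_eq_of_ne hk]
      refine apply_eq_zero_of_mul_apply_eq_zero hX.1 hY.1 (k := 1) ?_ ?_
      · simpa [hk] using congrFun hcol k
      · simpa using (congrFun hYi 1).trans_ne (by simp)
  fin_cases i
  · exact .inl (isUnit_of_eq_one_or_eq_flipMat (.inl (eq_one_of_row_zero_of_col_zero hX hXi hXcol)))
  · exact .inr (isUnit_of_eq_one_or_eq_flipMat (eq_one_or_eq_flipMat_of_row_one hY hYi))
  · exact .inl (isUnit_of_eq_one_or_eq_flipMat
      (.inr (eq_flipMat_of_row_zero_of_col_two hX hXi hXcol)))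

/-- An infinite family of irreducible elements of `E(3,ℕ)`, all with first row `(0, 1, 0)` and
middle column `(1, 0, 0)`. -/
def familyMat (n : ℕ) : Matrix (Fin 3) (Fin 3) ℤ :=
  !![0, 1, 0; n + 1, 0, n + 2; n, 0, n + 1]

theorem familyMat_mem (n : ℕ) : familyMat n ∈ E3N := by
  refine ⟨?_, Or.inl ?_, Or.inr ?_⟩
  · intro i j
    fin_cases i <;> fin_cases j <;> simp [familyMat] <;> lia
  · ext i j
    fin_cases i <;> fin_cases j <;>
      simp [familyMat, Emat, mul_apply, Fin.sum_univ_three] <;> ring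
  · simp only [familyMat, det_fin_three, of_apply, cons_val', cons_val_zero, cons_val_one, cons_val,
      cons_val_fin_one]
    ring

theorem familyMat_injective : Function.Injective familyMat := by
  intro a b hab
  simpa [familyMat] using congrFun (congrFun hab 2) 0

theorem irreducible_familyMat (n : ℕ) :
    Irreducible (⟨familyMat n, familyMat_mem n⟩ : submonoid) where
  not_isUnit hunit := by
    obtain ⟨j, hj⟩ := exists_row_eq_single_of_isUnit (H := submonoid) (fun _ h ↦ h.1) hunit 1
    have hle : familyMat n 1 2 ≤ 1 := by
      rw [← row_apply (familyMat n), hj, Pi.single_apply]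
      split_ifs <;> simp
    have hentry : familyMat n 1 2 = n + 2 := rfl
    lia
  isUnit_or_isUnit X Y hXY := by
    have hmul : (X * Y : Matrix (Fin 3) (Fin 3) ℤ) = familyMat n := (congrArg Subtype.val hXY).symm
    refine isUnit_or_isUnit_of_mul_row_zero_of_mul_col_one ?_ ?_ <;>
    · rw [hmul]
      ext i
      fin_cases i <;> simp [familyMat]

end E3N

/-- The monoid E(3,ℕ) is not finitely generated: there is no finite set S of
3×3 integer matrices contained in E(3,ℕ) such that the submonoid generated by
S equals E(3,ℕ). -/
theorem E3N_not_finitely_generated :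
    ¬ ∃ S : Finset (Matrix (Fin 3) (Fin 3) ℤ),
      (↑S : Set (Matrix (Fin 3) (Fin 3) ℤ)) ⊆ E3N ∧
      ∀ M : Matrix (Fin 3) (Fin 3) ℤ,
        M ∈ E3N ↔ M ∈ Submonoid.closure (↑S : Set (Matrix (Fin 3) (Fin 3) ℤ)) := by
  rintro ⟨S, -, hS⟩
  have hclosure : Submonoid.closure ↑S = E3N.submonoid := SetLike.ext fun M ↦ (hS M).symm
  have : Monoid.FG E3N.submonoid := (Monoid.fg_iff_submonoid_fg _).2 ⟨S, hclosure⟩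
  have : Finite E3N.submonoidˣ := finite_units_of_nonneg fun _ hM ↦ hM.1
  have hinfinite : {p : E3N.submonoid | Irreducible p}.Infinite :=
    Set.infinite_of_injective_forall_mem
      (fun _ _ h ↦ E3N.familyMat_injective (congrArg Subtype.val h)) E3N.irreducible_familyMat
  exact hinfinite finite_setOf_irreducible_of_finite_units
end

section
/- The units of the monoid Φ_3iet of 3iet preserving morphisms (under composition) are exactly the identity morphism and the morphism ξ given by ξ(A)=C, ξ(B)=B, ξ(C)=A. In particular, ξ ∈ Φ_3iet and ξ ∘ ξ is the identity morphism. -/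
/-- The three-letter alphabet {A, B, C}. -/
inductive Letter : Type
  | A | B | C
  deriving DecidableEq

/-- Left-closed 3-interval exchange transformation with parameters (α, β, γ),
defined piecewise on the domain [0, α+β+γ) (and extended by the same formulas
elsewhere). -/
noncomputable def Tleft (α β γ : ℝ) (x : ℝ) : ℝ :=
  if x < α then x + β + γ else if x < α + β then x - α + γ else x - α - β

/-- The inverse of `Tleft` on its domain. -/
noncomputable def TleftInv (α β γ : ℝ) (x : ℝ) : ℝ :=
  if x < γ then x + α + β else if x < β + γ then x + α - γ else x - β - γ

/-- Right-closed 3-interval exchange transformation with parameters (α, β, γ),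
defined piecewise on the domain (0, α+β+γ]. -/
noncomputable def Tright (α β γ : ℝ) (x : ℝ) : ℝ :=
  if x ≤ α then x + β + γ else if x ≤ α + β then x - α + γ else x - α - β

/-- The inverse of `Tright` on its domain. -/
noncomputable def TrightInv (α β γ : ℝ) (x : ℝ) : ℝ :=
  if x ≤ γ then x + α + β else if x ≤ β + γ then x + α - γ else x - β - γ

/-- ℤ-indexed iteration: nonnegative powers use `f`, negative powers use the
inverse map `g`. -/
noncomputable def zIter (f g : ℝ → ℝ) : ℤ → ℝ → ℝ
  | Int.ofNat n => f^[n]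
  | Int.negSucc n => g^[n + 1]

/-- The letter coding of a point, left-closed convention:
A on [0,α), B on [α,α+β), C on [α+β,α+β+γ). -/
noncomputable def codeLeft (α β : ℝ) (x : ℝ) : Letter :=
  if x < α then Letter.A else if x < α + β then Letter.B else Letter.C

/-- The letter coding of a point, right-closed convention:
A on (0,α], B on (α,α+β], C on (α+β,α+β+γ]. -/
noncomputable def codeRight (α β : ℝ) (x : ℝ) : Letter :=
  if x ≤ α then Letter.A else if x ≤ α + β then Letter.B else Letter.C

/-- The biinfinite word coding the orbit of x₀ under the left-closed
3-interval exchange transformation with parameters (α, β, γ). -/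
noncomputable def uLeft (α β γ x₀ : ℝ) (n : ℤ) : Letter :=
  codeLeft α β (zIter (Tleft α β γ) (TleftInv α β γ) n x₀)

/-- The biinfinite word coding the orbit of x₀ under the right-closed
3-interval exchange transformation with parameters (α, β, γ). -/
noncomputable def uRight (α β γ x₀ : ℝ) (n : ℤ) : Letter :=
  codeRight α β (zIter (Tright α β γ) (TrightInv α β γ) n x₀)

/-- A biinfinite word over {A,B,C} is a 3iet word if it codes the orbit of a
point under a 3-interval exchange transformation (in either convention) whose
parameters α, β, γ > 0 satisfy: α+β and β+γ are linearly independent over ℚ. -/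
def Is3ietWord (u : ℤ → Letter) : Prop :=
  ∃ α β γ x₀ : ℝ, 0 < α ∧ 0 < β ∧ 0 < γ ∧
    LinearIndependent ℚ ![α + β, β + γ] ∧
    ((x₀ ∈ Set.Ico (0 : ℝ) (α + β + γ) ∧ u = uLeft α β γ x₀) ∨
     (x₀ ∈ Set.Ioc (0 : ℝ) (α + β + γ) ∧ u = uRight α β γ x₀))

/-- A morphism over the alphabet {A,B,C}, determined by the images of the
three letters (as an endomorphism of the free monoid {A,B,C}*). -/
abbrev Morph := Letter → List Letter

/-- `IsImageWord φ u v` says that v is the biinfinite word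
···φ(u₋₂)φ(u₋₁)φ(u₀)φ(u₁)···, in which the block φ(u₀) starts at position 0:
`c m` is the position at which the block φ(u_m) starts. -/
def IsImageWord (φ : Morph) (u v : ℤ → Letter) : Prop :=
  ∃ c : ℤ → ℤ, c 0 = 0 ∧ (∀ m : ℤ, c (m + 1) = c m + (φ (u m)).length) ∧
    ∀ (m : ℤ) (i : ℕ) (h : i < (φ (u m)).length),
      v (c m + (i : ℤ)) = (φ (u m)).get ⟨i, h⟩

/-- A morphism is 3iet preserving if its letter images are nonempty (so that
it acts on biinfinite words) and it maps every 3iet word to a 3iet word. -/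
def Preserves3iet (φ : Morph) : Prop :=
  (∀ a, φ a ≠ []) ∧
  ∀ u v : ℤ → Letter, Is3ietWord u → IsImageWord φ u v → Is3ietWord v

/-- Composition of morphisms: `compM φ ψ` is the morphism φ ∘ ψ,
sending a letter a to the image under φ of the word ψ(a). -/
def compM (φ ψ : Morph) : Morph := fun a => ((ψ a).map φ).flatten

/-- The identity morphism. -/
def idM : Morph := fun a => [a]

/-- The morphism ξ : A ↦ C, B ↦ B, C ↦ A. -/
def xiM : Morph
  | Letter.A => [Letter.C]
  | Letter.B => [Letter.B]
  | Letter.C => [Letter.A]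

/-- U is a unit of the monoid Φ_3iet of 3iet preserving morphisms: U ∈ Φ_3iet
and for every φ ∈ Φ_3iet there are B, C ∈ Φ_3iet with φ = B ∘ U and φ = U ∘ C. -/
def IsUnitMorph (U : Morph) : Prop :=
  Preserves3iet U ∧ ∀ φ : Morph, Preserves3iet φ →
    (∃ B : Morph, Preserves3iet B ∧ φ = compM B U) ∧
    (∃ C : Morph, Preserves3iet C ∧ φ = compM U C)

/-!
The reflection `x ↦ α + β + γ - x` conjugates the two conventions and exchanges `α` with `γ`, so
swapping `A` and `C` maps 3iet words to 3iet words. Since `ξ` is an involution, composing with it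
shows that it is a unit.

Conversely, a unit `U` has a nonerasing left inverse, so `U` is induced by an injective map `σ` of
letters. If a 3iet word contains `AA`, then `β + γ < α`, and since `T` maps `I_B ∪ I_C` onto an
interval of length `β + γ` starting where `I_A` does, every letter other than `A` is followed by
`A`. The same holds for `C`, but it fails for `B`: some 3iet word starts with `BBAC`. As `σ`
transports this property, it has to fix `B`.
-/

/-! ### Orbits -/

section Orbit

variable {f g : ℝ → ℝ} {s : Set ℝ} {x : ℝ}

theorem semiconj_zIter {r f' g' : ℝ → ℝ} (hf : Function.Semiconj r f f')
    (hg : Function.Semiconj r g g') : ∀ n, Function.Semiconj r (zIter f g n) (zIter f' g' n)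
  | .ofNat n => hf.iterate_right n
  | .negSucc n => hg.iterate_right (n + 1)

theorem zIter_mem (hf : Set.MapsTo f s s) (hg : Set.MapsTo g s s) (hx : x ∈ s) :
    ∀ n, zIter f g n x ∈ s
  | .ofNat n => hf.iterate n hx
  | .negSucc n => hg.iterate (n + 1) hx

theorem zIter_add_one (hg : Set.MapsTo g s s) (hfg : Set.RightInvOn g f s) (hx : x ∈ s) :
    ∀ n, zIter f g (n + 1) x = f (zIter f g n x)
  | .ofNat n => Function.iterate_succ_apply' f n x
  | .negSucc 0 => (hfg hx).symm
  | .negSucc (n + 1) => by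
    have h := hfg (hg.iterate (n + 1) hx)
    rw [← Function.iterate_succ_apply' g] at h
    exact h.symm

end Orbit

section LeftClosed

variable {α β γ : ℝ}

theorem mapsTo_Tleft (hα : 0 ≤ α) (hβ : 0 ≤ β) (hγ : 0 ≤ γ) :
    Set.MapsTo (Tleft α β γ) (Set.Ico 0 (α + β + γ)) (Set.Ico 0 (α + β + γ)) := by
  rintro x ⟨hx₀, hx₁⟩
  unfold Tleft
  split_ifs <;> constructor <;> linarith

theorem mapsTo_TleftInv (hα : 0 ≤ α) (hβ : 0 ≤ β) (hγ : 0 ≤ γ) :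
    Set.MapsTo (TleftInv α β γ) (Set.Ico 0 (α + β + γ)) (Set.Ico 0 (α + β + γ)) := by
  rintro x ⟨hx₀, hx₁⟩
  unfold TleftInv
  split_ifs <;> constructor <;> linarith

theorem rightInvOn_TleftInv_Tleft (hβ : 0 ≤ β) :
    Set.RightInvOn (TleftInv α β γ) (Tleft α β γ) (Set.Ico 0 (α + β + γ)) := by
  rintro x ⟨hx₀, hx₁⟩
  unfold TleftInv Tleft
  split_ifs <;> linarith

theorem codeLeft_eq_A_iff {x : ℝ} : codeLeft α β x = .A ↔ x < α := by
  unfold codeLeft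
  split_ifs <;> simp_all

theorem codeLeft_eq_C_iff (hβ : 0 ≤ β) {x : ℝ} : codeLeft α β x = .C ↔ α + β ≤ x := by
  unfold codeLeft
  split_ifs <;> simp <;> linarith

end LeftClosed

/-! ### The reflection of the interval -/

/-- The permutation of the alphabet underlying the morphism `xiM`. -/
abbrev xiPerm : Equiv.Perm Letter := Equiv.swap .A .C

theorem xiPerm_comp_xiPerm_comp (u : ℤ → Letter) : xiPerm ∘ xiPerm ∘ u = u := by
  funext n
  simp

section Reflection

variable {β : ℝ} (α γ : ℝ)

theorem semiconj_reflect_Tleft_Tright (hβ : 0 ≤ β) :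
    Function.Semiconj (α + β + γ - ·) (Tleft α β γ) (Tright γ β α) := by
  intro x
  unfold Tleft Tright
  split_ifs <;> linarith

theorem semiconj_reflect_TleftInv_TrightInv (hβ : 0 ≤ β) :
    Function.Semiconj (α + β + γ - ·) (TleftInv α β γ) (TrightInv γ β α) := by
  intro x
  unfold TleftInv TrightInv
  split_ifs <;> linarith

theorem codeRight_reflect (hβ : 0 ≤ β) (x : ℝ) :
    codeRight γ β (α + β + γ - x) = xiPerm (codeLeft α β x) := by
  unfold codeRight codeLeft
  split_ifs <;> first | rfl | linarith

theorem uRight_reflect (hβ : 0 ≤ β) (x : ℝ) :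
    uRight γ β α (α + β + γ - x) = xiPerm ∘ uLeft α β γ x := by
  funext n
  have orbit_reflect := semiconj_zIter (semiconj_reflect_Tleft_Tright α γ hβ)
    (semiconj_reflect_TleftInv_TrightInv α γ hβ) n x
  rw [uRight, ← orbit_reflect]
  exact codeRight_reflect α γ hβ _

theorem uLeft_reflect (hβ : 0 ≤ β) (x : ℝ) :
    uLeft γ β α (α + β + γ - x) = xiPerm ∘ uRight α β γ x := by
  have h := uRight_reflect γ α hβ (α + β + γ - x)
  rw [show γ + β + α - (α + β + γ - x) = x by ring] at h
  rw [h, xiPerm_comp_xiPerm_comp]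

end Reflection

/-- The 3iet words in the left-closed convention; up to `xiPerm`, these are all 3iet words. -/
def IsLeft3ietWord (u : ℤ → Letter) : Prop :=
  ∃ α β γ x₀ : ℝ, 0 < α ∧ 0 < β ∧ 0 < γ ∧ LinearIndependent ℚ ![α + β, β + γ] ∧
    x₀ ∈ Set.Ico (0 : ℝ) (α + β + γ) ∧ u = uLeft α β γ x₀

theorem linearIndependent_reflect {α β γ : ℝ} (h : LinearIndependent ℚ ![α + β, β + γ]) :
    LinearIndependent ℚ ![γ + β, β + α] := by
  rw [add_comm γ β, add_comm β α]
  exact LinearIndependent.pair_symm_iff.mp h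

theorem is3ietWord_iff_isLeft3ietWord {u : ℤ → Letter} :
    Is3ietWord u ↔ IsLeft3ietWord u ∨ IsLeft3ietWord (xiPerm ∘ u) := by
  constructor
  · rintro ⟨α, β, γ, x, hα, hβ, hγ, hli, ⟨hx, rfl⟩ | ⟨⟨hx₀, hx₁⟩, rfl⟩⟩
    · exact .inl ⟨α, β, γ, x, hα, hβ, hγ, hli, hx, rfl⟩
    · exact .inr ⟨γ, β, α, α + β + γ - x, hγ, hβ, hα, linearIndependent_reflect hli,
        ⟨by linarith, by linarith⟩, (uLeft_reflect α γ hβ.le x).symm⟩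
  · rintro (⟨α, β, γ, x, hα, hβ, hγ, hli, hx, rfl⟩ |
      ⟨α, β, γ, x, hα, hβ, hγ, hli, ⟨hx₀, hx₁⟩, hu⟩)
    · exact ⟨α, β, γ, x, hα, hβ, hγ, hli, .inl ⟨hx, rfl⟩⟩
    · refine ⟨γ, β, α, α + β + γ - x, hγ, hβ, hα, linearIndependent_reflect hli,
        .inr ⟨⟨by linarith, by linarith⟩, ?_⟩⟩
      rw [uRight_reflect α γ hβ.le, ← hu, xiPerm_comp_xiPerm_comp]

theorem Is3ietWord.xiPerm_comp {u : ℤ → Letter} (hu : Is3ietWord u) :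
    Is3ietWord (xiPerm ∘ u) := by
  rw [is3ietWord_iff_isLeft3ietWord] at hu ⊢
  rwa [xiPerm_comp_xiPerm_comp, or_comm]

/-! ### Letter-to-letter morphisms -/

/-- The morphism induced by a map of the alphabet; the units turn out to be of this form. -/
def letterMorph (σ : Letter → Letter) : Morph := fun a => [σ a]

theorem xiM_eq_letterMorph : xiM = letterMorph xiPerm := by
  funext a
  cases a <;> rfl

theorem compM_letterMorph (φ : Morph) (σ : Letter → Letter) :
    compM φ (letterMorph σ) = φ ∘ σ := by
  funext a
  simp [compM, letterMorph]

theorem letterMorph_compM (σ : Letter → Letter) (φ : Morph) :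
    compM (letterMorph σ) φ = fun a => (φ a).map σ := by
  funext a
  rw [List.map_eq_flatMap]
  rfl

theorem isImageWord_letterMorph {σ : Letter → Letter} {u v : ℤ → Letter} :
    IsImageWord (letterMorph σ) u v ↔ v = σ ∘ u := by
  constructor
  · rintro ⟨c, c_zero, c_add_one, hv⟩
    have c_eq (m : ℤ) : c m = m := by
      induction m using Int.induction_on with
      | zero => exact c_zero
      | succ i ih => simpa [letterMorph, ih] using c_add_one i
      | pred i ih =>
        have h := c_add_one (-i - 1)
        simp only [sub_add_cancel, ih, letterMorph, List.length_singleton, Nat.cast_one] at h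
        exact eq_sub_of_add_eq h.symm
    funext m
    simpa [c_eq, letterMorph] using hv m 0 Nat.one_pos
  · rintro rfl
    refine ⟨id, rfl, fun m => rfl, fun m i hi => ?_⟩
    obtain rfl : i = 0 := Nat.lt_one_iff.mp hi
    simp [letterMorph]

theorem isImageWord_compM_letterMorph {φ : Morph} {σ : Letter → Letter} {u v : ℤ → Letter} :
    IsImageWord (compM φ (letterMorph σ)) u v ↔ IsImageWord φ (σ ∘ u) v := by
  rw [compM_letterMorph]
  rfl

theorem isImageWord_letterMorph_compM {σ : Equiv.Perm Letter} {φ : Morph} {u v : ℤ → Letter} :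
    IsImageWord (compM (letterMorph σ) φ) u v ↔ IsImageWord φ u (σ.symm ∘ v) := by
  simp [IsImageWord, letterMorph_compM, Equiv.symm_apply_eq]

theorem preserves3iet_letterMorph {σ : Letter → Letter} :
    Preserves3iet (letterMorph σ) ↔ ∀ u, Is3ietWord u → Is3ietWord (σ ∘ u) := by
  simp [Preserves3iet, isImageWord_letterMorph, letterMorph]

theorem preserves3iet_idM : Preserves3iet idM :=
  preserves3iet_letterMorph.mpr fun _ hu => hu

theorem preserves3iet_xiM : Preserves3iet xiM := by
  rw [xiM_eq_letterMorph, preserves3iet_letterMorph]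
  exact fun _ hu => hu.xiPerm_comp

theorem Preserves3iet.compM_letterMorph {φ : Morph} {σ : Letter → Letter}
    (hφ : Preserves3iet φ) (hσ : Preserves3iet (letterMorph σ)) :
    Preserves3iet (compM φ (letterMorph σ)) := by
  refine ⟨fun a => ?_, fun u v hu hv => ?_⟩
  · rw [_root_.compM_letterMorph]
    exact hφ.1 (σ a)
  · exact hφ.2 _ v (preserves3iet_letterMorph.mp hσ u hu) (isImageWord_compM_letterMorph.mp hv)

theorem Preserves3iet.letterMorph_compM {σ : Equiv.Perm Letter} {φ : Morph}
    (hσ : Preserves3iet (letterMorph σ)) (hφ : Preserves3iet φ) :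
    Preserves3iet (compM (letterMorph σ) φ) := by
  refine ⟨fun a => ?_, fun u v hu hv => ?_⟩
  · simpa [_root_.letterMorph_compM] using hφ.1 a
  · have hw : Is3ietWord (σ.symm ∘ v) := hφ.2 u _ hu (isImageWord_letterMorph_compM.mp hv)
    simpa [← Function.comp_assoc] using preserves3iet_letterMorph.mp hσ _ hw

theorem isUnitMorph_letterMorph {σ : Equiv.Perm Letter} (hσ : Preserves3iet (letterMorph σ))
    (hσ' : Preserves3iet (letterMorph σ.symm)) : IsUnitMorph (letterMorph σ) := by
  refine ⟨hσ, fun φ hφ => ⟨⟨_, hφ.compM_letterMorph hσ', ?_⟩, ⟨_, hσ'.letterMorph_compM hφ, ?_⟩⟩⟩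
  · simp [compM_letterMorph, Function.comp_assoc]
  · simp [letterMorph_compM]

theorem isUnitMorph_idM : IsUnitMorph idM :=
  isUnitMorph_letterMorph (σ := Equiv.refl Letter) preserves3iet_idM preserves3iet_idM

theorem isUnitMorph_xiM : IsUnitMorph xiM := by
  have hξ : Preserves3iet (letterMorph xiPerm) := xiM_eq_letterMorph ▸ preserves3iet_xiM
  rw [xiM_eq_letterMorph]
  exact isUnitMorph_letterMorph hξ hξ

theorem compM_xiM_xiM : compM xiM xiM = idM := by
  funext a
  cases a <;> rfl

theorem length_le_length_compM {V : Morph} (hV : ∀ a, V a ≠ []) (U : Morph) (a : Letter) :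
    (U a).length ≤ (compM V U a).length := by
  have h := List.length_le_sum_of_one_le (((U a).map V).map List.length)
    (by simpa [Nat.one_le_iff_ne_zero] using fun b _ => hV b)
  simpa [compM] using h

theorem exists_injective_letterMorph_of_compM_eq_idM {U V : Morph} (hV : ∀ a, V a ≠ [])
    (hVU : compM V U = idM) : ∃ σ, Function.Injective σ ∧ U = letterMorph σ := by
  have eq_singleton (a : Letter) : ∃ b, U a = [b] := by
    have length_le_one : (U a).length ≤ 1 := by
      simpa [hVU, idM] using length_le_length_compM hV U a
    have ne_nil : U a ≠ [] := fun h => by simpa [compM, idM, h] using congrFun hVU a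
    exact List.length_eq_one_iff.mp (length_le_one.antisymm (List.length_pos_iff.mpr ne_nil))
  choose σ hσ using eq_singleton
  obtain rfl : U = letterMorph σ := funext hσ
  rw [compM_letterMorph] at hVU
  have idM_injective : Function.Injective idM := List.singleton_injective
  exact ⟨σ, (hVU ▸ idM_injective).of_comp, rfl⟩

/-! ### Squares of letters -/

/-- If `aa` is a factor of `u`, then `a` occurs in every factor of length two. Injective maps of
the alphabet transport this property, which tells `B` apart from `A` and `C` in 3iet words. -/
def IsSquareDominant (a : Letter) (u : ℤ → Letter) : Prop :=
  ∀ m n, u m = a → u (m + 1) = a → u n = a ∨ u (n + 1) = a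

theorem isSquareDominant_comp_iff {σ : Letter → Letter} (hσ : Function.Injective σ) {a : Letter}
    {u : ℤ → Letter} : IsSquareDominant (σ a) (σ ∘ u) ↔ IsSquareDominant a u := by
  simp [IsSquareDominant, hσ.eq_iff]

theorem IsLeft3ietWord.exists_orbit {u : ℤ → Letter} (hu : IsLeft3ietWord u) :
    ∃ α β γ : ℝ, 0 < β ∧ ∃ z : ℤ → ℝ, (∀ n, z n ∈ Set.Ico 0 (α + β + γ)) ∧
      (∀ n, z (n + 1) = Tleft α β γ (z n)) ∧ ∀ n, u n = codeLeft α β (z n) := by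
  obtain ⟨α, β, γ, x, hα, hβ, hγ, -, hx, rfl⟩ := hu
  have hT := mapsTo_Tleft hα.le hβ.le hγ.le
  have hT' := mapsTo_TleftInv hα.le hβ.le hγ.le
  exact ⟨α, β, γ, hβ, fun n => zIter (Tleft α β γ) (TleftInv α β γ) n x, zIter_mem hT hT' hx,
    zIter_add_one hT' (rightInvOn_TleftInv_Tleft hβ.le) hx, fun _ => rfl⟩

theorem IsLeft3ietWord.isSquareDominant_A {u : ℤ → Letter} (hu : IsLeft3ietWord u) :
    IsSquareDominant .A u := by
  obtain ⟨α, β, γ, hβ, z, z_mem, z_add_one, hu⟩ := hu.exists_orbit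
  intro m n
  simp only [hu, codeLeft_eq_A_iff, z_add_one]
  intro hm hm'
  have hβγ : β + γ < α := by
    rw [Tleft, if_pos hm] at hm'
    linarith [(z_mem m).1]
  refine or_iff_not_imp_left.mpr fun hn => ?_
  rw [Tleft, if_neg hn]
  split_ifs <;> linarith [(z_mem n).2]

theorem IsLeft3ietWord.isSquareDominant_C {u : ℤ → Letter} (hu : IsLeft3ietWord u) :
    IsSquareDominant .C u := by
  obtain ⟨α, β, γ, hβ, z, z_mem, z_add_one, hu⟩ := hu.exists_orbit
  intro m n
  simp only [hu, codeLeft_eq_C_iff hβ.le, z_add_one]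
  intro hm hm'
  have hαβ : α + β < γ := by
    rw [Tleft, if_neg (by linarith), if_neg hm.not_gt] at hm'
    linarith [(z_mem m).2]
  refine or_iff_not_imp_left.mpr fun hn => ?_
  unfold Tleft
  split_ifs <;> linarith [(z_mem n).1]

theorem Is3ietWord.isSquareDominant {u : ℤ → Letter} (hu : Is3ietWord u) {a : Letter}
    (ha : a ≠ .B) : IsSquareDominant a u := by
  rcases is3ietWord_iff_isLeft3ietWord.mp hu with h | h
  · cases a with
    | A => exact h.isSquareDominant_A
    | B => exact absurd rfl ha
    | C => exact h.isSquareDominant_C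
  · rw [← isSquareDominant_comp_iff xiPerm.injective]
    cases a with
    | A => exact h.isSquareDominant_C
    | B => exact absurd rfl ha
    | C => exact h.isSquareDominant_A

theorem linearIndependent_rat_pair_of_irrational_div {x y : ℝ} (h : Irrational (x / y)) :
    LinearIndependent ℚ ![x, y] := by
  have hy : y ≠ 0 := fun hy => h.ne_zero (by simp [hy])
  rw [LinearIndependent.pair_symm_iff, LinearIndependent.pair_iff' hy]
  rintro q rfl
  exact h ⟨q, by simp [Rat.smul_def, hy]⟩

theorem linearIndependent_sqrt_two_add_one : LinearIndependent ℚ ![√2 + 1, (1 : ℝ) + 1] := by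
  apply linearIndependent_rat_pair_of_irrational_div
  exact_mod_cast (irrational_sqrt_two.add_natCast 1).div_natCast two_ne_zero

theorem exists_is3ietWord_BBAC :
    ∃ u, Is3ietWord u ∧ u 0 = .B ∧ u 1 = .B ∧ u 2 = .A ∧ u 3 = .C := by
  have hlt : 1.4 < √2 := Real.lt_sqrt_of_sq_lt (by norm_num)
  have hgt : √2 < 1.5 := (Real.sqrt_lt' (by norm_num)).mpr (by norm_num)
  have orbit₁ : Tleft √2 1 1 2 = 3 - √2 := by
    rw [Tleft, if_neg (by linarith), if_pos (by linarith)]; ring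
  have orbit₂ : Tleft √2 1 1 (3 - √2) = 4 - 2 * √2 := by
    rw [Tleft, if_neg (by linarith), if_pos (by linarith)]; ring
  have orbit₃ : Tleft √2 1 1 (4 - 2 * √2) = 6 - 2 * √2 := by
    rw [Tleft, if_pos (by linarith)]; ring
  refine ⟨uLeft √2 1 1 2, ⟨√2, 1, 1, 2, by linarith, one_pos, one_pos,
    linearIndependent_sqrt_two_add_one, .inl ⟨⟨by norm_num, by linarith⟩, rfl⟩⟩, ?_, ?_, ?_, ?_⟩
  · change codeLeft √2 1 2 = .B
    rw [codeLeft, if_neg (by linarith), if_pos (by linarith)]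
  · change codeLeft √2 1 (Tleft √2 1 1 2) = .B
    rw [orbit₁, codeLeft, if_neg (by linarith), if_pos (by linarith)]
  · change codeLeft √2 1 (Tleft √2 1 1 (Tleft √2 1 1 2)) = .A
    rw [orbit₁, orbit₂, codeLeft_eq_A_iff]
    linarith
  · change codeLeft √2 1 (Tleft √2 1 1 (Tleft √2 1 1 (Tleft √2 1 1 2))) = .C
    rw [orbit₁, orbit₂, orbit₃, codeLeft_eq_C_iff zero_le_one]
    linarith

theorem exists_is3ietWord_not_isSquareDominant_B :
    ∃ u, Is3ietWord u ∧ ¬IsSquareDominant .B u := by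
  obtain ⟨u, hu, h₀, h₁, h₂, h₃⟩ := exists_is3ietWord_BBAC
  exact ⟨u, hu, fun h => by simpa [h₂, h₃] using h 0 2 h₀ h₁⟩

/-! ### Units -/

theorem apply_B_eq_B_of_preserves3iet_letterMorph {σ : Letter → Letter}
    (hσ : Function.Injective σ) (h : Preserves3iet (letterMorph σ)) : σ .B = .B := by
  obtain ⟨u, hu, not_dominant⟩ := exists_is3ietWord_not_isSquareDominant_B
  have hσu : Is3ietWord (σ ∘ u) := preserves3iet_letterMorph.mp h u hu
  by_contra hB
  exact not_dominant ((isSquareDominant_comp_iff hσ).mp (hσu.isSquareDominant hB))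

theorem eq_id_or_eq_xiPerm_of_apply_B_eq_B {σ : Letter → Letter} (hσ : Function.Injective σ)
    (hB : σ .B = .B) : σ = id ∨ σ = xiPerm := by
  have hAB : σ .A ≠ .B := hB ▸ hσ.ne (by decide)
  have hCB : σ .C ≠ .B := hB ▸ hσ.ne (by decide)
  have hAC : σ .A ≠ σ .C := hσ.ne (by decide)
  cases hA : σ .A <;> cases hC : σ .C <;> simp_all only [ne_eq, not_true_eq_false]
  · exact .inl (funext fun a => by cases a <;> assumption)
  · exact .inr (funext fun a => by cases a <;> assumption)

theorem IsUnitMorph.eq_idM_or_eq_xiM {U : Morph} (hU : IsUnitMorph U) : U = idM ∨ U = xiM := by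
  obtain ⟨⟨V, hV, hVU⟩, -⟩ := hU.2 idM preserves3iet_idM
  obtain ⟨σ, hσ, rfl⟩ := exists_injective_letterMorph_of_compM_eq_idM hV.1 hVU.symm
  have hB := apply_B_eq_B_of_preserves3iet_letterMorph hσ hU.1
  obtain rfl | rfl := eq_id_or_eq_xiPerm_of_apply_B_eq_B hσ hB
  · exact .inl rfl
  · exact .inr xiM_eq_letterMorph.symm

/-- The units of the monoid of 3iet preserving morphisms are exactly the
identity morphism and ξ; in particular ξ is 3iet preserving and ξ ∘ ξ = id. -/
theorem units_of_Phi3iet :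
    Preserves3iet xiM ∧ compM xiM xiM = idM ∧
    ∀ U : Morph, IsUnitMorph U ↔ (U = idM ∨ U = xiM) := by
  refine ⟨preserves3iet_xiM, compM_xiM_xiM, fun U => ⟨IsUnitMorph.eq_idM_or_eq_xiM, ?_⟩⟩
  rintro (rfl | rfl)
  · exact isUnitMorph_idM
  · exact isUnitMorph_xiM
end
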